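/- Let I ⊆ [0,1] be an interval of positive length |I| and let δ > 0. Define L_I(ε) = (1/|I|) · 2√ε · Σ_{q ≥ 1, q² ≤ 1/ε} Σ_{a : a/q ∈ I, gcd(a,q)=1} √(1/q² − ε). Then there is a constant C(δ) depending only on δ such that for all 0 < ε ≤ 1/2 one has |L_I(ε) − 3/π| ≤ C(δ)·|I|⁻¹·ε^{1/2−δ}. -/

import Mathlib

open MeasureTheory

/-- `S_I ε = 2√ε · Σ_{q ≥ 1, q² ≤ 1/ε} Σ_{a : a/q ∈ I, gcd(a,q)=1} √(1/q² − ε)`. -/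
noncomputable def SI (I : Set ℝ) (ε : ℝ) : ℝ :=
  2 * Real.sqrt ε *
    ∑' q : ℕ, if 1 ≤ q ∧ (q : ℝ) ^ 2 ≤ 1 / ε then
      ({a : ℤ | (a : ℝ) / q ∈ I ∧ Int.gcd a q = 1}.ncard : ℝ) *
        Real.sqrt (1 / (q : ℝ) ^ 2 - ε) else 0

/-- `L_I ε = S_I ε / |I|`, the proportion of the horizontal segment at height `ε` over the
interval `I` lying inside Ford disks. -/
noncomputable def LI (I : Set ℝ) (ε : ℝ) : ℝ := SI I ε / (volume I).toReal


noncomputable def fcnt (I : Set ℝ) (m : ℕ) : ℕ := {b : ℤ | (b : ℝ) / m ∈ I}.ncard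

lemma fcnt_finite (I : Set ℝ) (hI : I ⊆ Set.Icc (0 : ℝ) 1) (m : ℕ) (hm : 1 ≤ m) :
    {b : ℤ | (b : ℝ) / m ∈ I}.Finite := by
  refine (Set.finite_Icc (0 : ℤ) m).subset ?_
  intro b hb
  have h := hI hb
  have hm' : (0 : ℝ) < m := by exact_mod_cast hm
  rw [Set.mem_Icc, le_div_iff₀ hm', div_le_iff₀ hm'] at h
  constructor
  · have := h.1; simp at this; exact this
  · have := h.2; simp at this; exact_mod_cast this

lemma interval_ends (I : Set ℝ) (hO : I.OrdConnected) (hI : I ⊆ Set.Icc (0 : ℝ) 1)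
    (hv : 0 < (volume I).toReal) :
    ∃ s t : ℝ, s < t ∧ Set.Ioo s t ⊆ I ∧ I ⊆ Set.Icc s t ∧ (volume I).toReal = t - s := by
  have hne : I.Nonempty := by
    rw [Set.nonempty_iff_ne_empty]; rintro rfl; simp at hv
  have hb : BddBelow I := bddBelow_Icc.mono hI
  have ha : BddAbove I := bddAbove_Icc.mono hI
  have h1 : Set.Ioo (sInf I) (sSup I) ⊆ I := by
    intro x hx
    obtain ⟨y, hy, hyx⟩ := exists_lt_of_csInf_lt hne hx.1
    obtain ⟨z, hz, hxz⟩ := exists_lt_of_lt_csSup hne hx.2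
    exact hO.out hy hz ⟨hyx.le, hxz.le⟩
  have h2 : I ⊆ Set.Icc (sInf I) (sSup I) := fun x hx => ⟨csInf_le hb hx, le_csSup ha hx⟩
  have h3 : volume I = ENNReal.ofReal (sSup I - sInf I) := by
    apply le_antisymm
    · simpa using measure_mono (μ := volume) h2
    · simpa using measure_mono (μ := volume) h1
  have h4 : sInf I < sSup I := by
    by_contra h
    rw [h3, ENNReal.ofReal_of_nonpos (by linarith)] at hv
    simp at hv
  exact ⟨_, _, h4, h1, h2, by rw [h3, ENNReal.toReal_ofReal (by linarith)]⟩

lemma fcnt_bound (I : Set ℝ) (hO : I.OrdConnected) (hI : I ⊆ Set.Icc (0 : ℝ) 1)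
    (hv : 0 < (volume I).toReal) (m : ℕ) (hm : 1 ≤ m) :
    |(fcnt I m : ℝ) - (volume I).toReal * m| ≤ 1 := by
  obtain ⟨s, t, hst, h1, h2, h3⟩ := interval_ends I hO hI hv
  have hm' : (0 : ℝ) < m := by exact_mod_cast hm
  have hfin := fcnt_finite I hI m hm
  have hlt : s * m < t * m := by gcongr
  rw [h3, abs_le]
  constructor
  · have hsub : ((Finset.Ioo ⌊s * m⌋ ⌈t * m⌉ : Finset ℤ) : Set ℤ) ⊆ {b : ℤ | (b : ℝ) / m ∈ I} := by
      intro b hb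
      simp only [Finset.coe_Ioo, Set.mem_Ioo, Int.floor_lt, Int.lt_ceil] at hb
      apply h1
      rw [Set.mem_Ioo, lt_div_iff₀ hm', div_lt_iff₀ hm']
      exact hb
    have h := Set.ncard_le_ncard hsub hfin
    rw [Set.ncard_coe_finset, Int.card_Ioo] at h
    have h' : ⌈t * m⌉ - ⌊s * m⌋ - 1 ≤ (fcnt I m : ℤ) := by
      unfold fcnt; omega
    have h'' : ((⌈t * m⌉ : ℤ) : ℝ) - (⌊s * m⌋ : ℤ) - 1 ≤ (fcnt I m : ℝ) := by exact_mod_cast h'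
    have := Int.floor_le (s * m)
    have := Int.le_ceil (t * m)
    linarith
  · have hsub : {b : ℤ | (b : ℝ) / m ∈ I} ⊆ ((Finset.Icc ⌈s * m⌉ ⌊t * m⌋ : Finset ℤ) : Set ℤ) := by
      intro b hb
      have := h2 hb
      rw [Set.mem_Icc, le_div_iff₀ hm', div_le_iff₀ hm'] at this
      simp only [Finset.coe_Icc, Set.mem_Icc, Int.ceil_le, Int.le_floor]
      exact this
    have h := Set.ncard_le_ncard hsub (Finset.finite_toSet _)
    rw [Set.ncard_coe_finset, Int.card_Icc] at h
    have := Int.floor_le (t * m)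
    have := Int.le_ceil (s * m)
    change fcnt I m ≤ _ at h
    rcases le_total 0 (⌊t * m⌋ + 1 - ⌈s * m⌉) with h0 | h0
    · have h' : (fcnt I m : ℤ) ≤ ⌊t * m⌋ + 1 - ⌈s * m⌉ := by omega
      have h'' : (fcnt I m : ℝ) ≤ (⌊t * m⌋ : ℤ) + 1 - ((⌈s * m⌉ : ℤ) : ℝ) := by exact_mod_cast h'
      linarith
    · have h' : fcnt I m = 0 := by omega
      rw [h']; push_cast; linarith

open ArithmeticFunction in
lemma moebius_ind (n : ℕ) (hn : n ≠ 0) :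
    ∑ d ∈ n.divisors, moebius d = if n = 1 then 1 else 0 := by
  have := congrArg (fun f : ArithmeticFunction ℤ => f n) moebius_mul_coe_zeta
  simp only [coe_mul_zeta_apply, one_apply] at this
  exact this

open ArithmeticFunction in
lemma cop_count (I : Set ℝ) (hI : I ⊆ Set.Icc (0 : ℝ) 1) (q : ℕ) (hq : 1 ≤ q) :
    ({a : ℤ | (a : ℝ) / q ∈ I ∧ Int.gcd a q = 1}.ncard : ℤ)
      = ∑ d ∈ q.divisors, moebius d * (fcnt I (q / d) : ℤ) := by
  classical
  have hfin := fcnt_finite I hI q hq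
  set F := hfin.toFinset with hF
  have e1 : {a : ℤ | (a : ℝ) / q ∈ I ∧ Int.gcd a q = 1} = (F.filter (fun a => Int.gcd a q = 1) : Set ℤ) := by
    ext a; simp [hF]
  have e2 : ∀ d ∈ q.divisors, (fcnt I (q / d)) = (F.filter (fun a : ℤ => (d : ℤ) ∣ a)).card := by
    intro d hd
    obtain ⟨⟨k, hk⟩, -⟩ := Nat.mem_divisors.1 hd
    have hd0 : d ≠ 0 := by rintro rfl; simp at hk; omega
    have hqd : q / d = k := by rw [hk]; exact Nat.mul_div_cancel_left _ (Nat.pos_of_ne_zero hd0)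
    rw [hqd, fcnt, ← Set.ncard_coe_finset]
    rw [← Set.ncard_image_of_injective (f := fun b : ℤ => (d : ℤ) * b)]
    · congr 1
      ext a
      simp only [Set.mem_image, Set.mem_ofPred_eq, Finset.coe_filter, hF, Set.Finite.mem_toFinset]
      have hdr : (d : ℝ) ≠ 0 := by exact_mod_cast hd0
      constructor
      · rintro ⟨b, hb, rfl⟩
        refine ⟨?_, dvd_mul_right _ _⟩
        rw [hk]; push_cast
        rwa [mul_div_mul_left _ _ hdr]
      · rintro ⟨ha, b, rfl⟩
        refine ⟨b, ?_, rfl⟩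
        rw [hk] at ha; push_cast at ha
        rwa [mul_div_mul_left _ _ hdr] at ha
    · intro x y hxy
      have : (d : ℤ) ≠ 0 := by exact_mod_cast hd0
      exact mul_left_cancel₀ this hxy
  rw [e1, Set.ncard_coe_finset, Finset.card_filter]
  push_cast
  have e3 : ∀ a ∈ F, (if Int.gcd a q = 1 then (1 : ℤ) else 0)
      = ∑ d ∈ q.divisors, if (d : ℤ) ∣ a then moebius d else 0 := by
    intro a _
    have hg : Int.gcd a q ≠ 0 := by
      intro h; rw [Int.gcd_eq_zero_iff] at h; omega
    rw [← moebius_ind _ hg, ← Finset.sum_filter]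
    apply Finset.sum_congr _ (fun _ _ => rfl)
    ext d
    simp only [Nat.mem_divisors, Finset.mem_filter]
    constructor
    · rintro ⟨h, -⟩
      have := Int.dvd_coe_gcd_iff.1 (Int.natCast_dvd_natCast.2 h)
      exact ⟨⟨Int.natCast_dvd_natCast.1 this.2, by omega⟩, this.1⟩
    · rintro ⟨⟨h, _⟩, h'⟩
      exact ⟨Int.natCast_dvd_natCast.1 (Int.dvd_coe_gcd_iff.2 ⟨h', Int.natCast_dvd_natCast.2 h⟩), hg⟩
  rw [Finset.sum_congr rfl e3, Finset.sum_comm]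
  apply Finset.sum_congr rfl
  intro d hd
  rw [e2 d hd, ← Finset.sum_filter]
  simp [mul_comm]


open ArithmeticFunction in
lemma moebius_hasSum : HasSum (fun d : ℕ => (moebius d : ℝ) / (d : ℝ) ^ 2) (6 / Real.pi ^ 2) := by
  have h2 : (1 : ℝ) < (2 : ℂ).re := by norm_num
  have hs := (LSeriesSummable_moebius_iff.mpr h2).hasSum
  have hv := LSeries_zeta_mul_Lseries_moebius h2
  rw [LSeries_zeta_eq_riemannZeta h2, riemannZeta_two] at hv
  have hpi : (Real.pi : ℂ) ≠ 0 := by exact_mod_cast Real.pi_ne_zero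
  have hv' : LSeries (fun n => ((moebius n : ℤ) : ℂ)) 2 = 6 / (Real.pi : ℂ) ^ 2 := by
    field_simp at hv ⊢
    linear_combination hv
  change HasSum _ (LSeries (fun n => ((moebius n : ℤ) : ℂ)) 2) at hs
  rw [hv'] at hs
  rw [← Complex.hasSum_ofReal]
  push_cast
  convert hs using 2 with d
  rcases eq_or_ne d 0 with rfl | hd
  · simp
  · rw [LSeries.term_of_ne_zero hd]
    norm_cast

open ArithmeticFunction in
lemma abs_moebius_real (d : ℕ) : |(moebius d : ℝ)| ≤ 1 := by
  exact_mod_cast abs_moebius_le_one (n := d)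

open ArithmeticFunction in
lemma moebius_tail (N : ℕ) (hN : 1 ≤ N) :
    |∑ d ∈ Finset.Icc 1 N, (moebius d : ℝ) / (d : ℝ) ^ 2 - 6 / Real.pi ^ 2| ≤ (1 : ℝ) / N := by
  have ht := (moebius_hasSum.tendsto_sum_nat).comp (Filter.tendsto_add_atTop_nat 1)
  have ht2 := (ht.const_sub (∑ d ∈ Finset.Icc 1 N, (moebius d : ℝ) / (d : ℝ) ^ 2)).abs
  refine le_of_tendsto ht2 ?_
  filter_upwards [Filter.eventually_ge_atTop N] with M hM
  have e : ∑ d ∈ Finset.range (M + 1), (moebius d : ℝ) / (d : ℝ) ^ 2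
      = ∑ d ∈ Finset.Icc 1 N, (moebius d : ℝ) / (d : ℝ) ^ 2
        + ∑ d ∈ Finset.Ioc N M, (moebius d : ℝ) / (d : ℝ) ^ 2 := by
    rw [← Finset.sum_union]
    · symm
      apply Finset.sum_subset
      · intro x; simp; omega
      · intro x hx hx'
        have : x = 0 := by simp at hx hx'; omega
        simp [this]
    · rw [Finset.disjoint_left]; intro x; simp; omega
  simp only [Function.comp]
  rw [e, sub_add_cancel_left, abs_neg]
  calc _ ≤ ∑ d ∈ Finset.Ioc N M, |(moebius d : ℝ) / (d : ℝ) ^ 2| := Finset.abs_sum_le_sum_abs _ _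
    _ ≤ ∑ d ∈ Finset.Ioc N M, ((d : ℝ) ^ 2)⁻¹ := by
      apply Finset.sum_le_sum
      intro d _
      rw [abs_div, abs_of_nonneg (sq_nonneg (d : ℝ)), div_eq_mul_inv]
      exact mul_le_of_le_one_left (by positivity) (abs_moebius_real d)
    _ ≤ (N : ℝ)⁻¹ - (M : ℝ)⁻¹ := sum_Ioc_inv_sq_le_sub (by omega) hM
    _ ≤ (1 : ℝ) / N := by
      rw [one_div]; have : (0 : ℝ) ≤ (M : ℝ)⁻¹ := by positivity
      linarith

lemma quarter : ∫ x in (0 : ℝ)..1, √(1 - x ^ 2) = Real.pi / 4 := by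
  have h := integral_sqrt_one_sub_sq
  have hc : Continuous fun x : ℝ => √(1 - x ^ 2) := by fun_prop
  rw [← intervalIntegral.integral_add_adjacent_intervals (b := 0) (hc.intervalIntegrable _ _)
    (hc.intervalIntegrable _ _)] at h
  have h2 : ∫ x in (-1 : ℝ)..0, √(1 - x ^ 2) = ∫ x in (0 : ℝ)..1, √(1 - x ^ 2) := by
    have := intervalIntegral.integral_comp_neg (a := (-1 : ℝ)) (b := 0) (fun x : ℝ => √(1 - x ^ 2))
    simpa using this
  linarith

lemma quarter' (T : ℝ) (hT : 1 ≤ T) : ∫ x in (0 : ℝ)..T, √(1 - x ^ 2) = Real.pi / 4 := by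
  have hc : Continuous fun x : ℝ => √(1 - x ^ 2) := by fun_prop
  rw [← intervalIntegral.integral_add_adjacent_intervals (b := 1) (hc.intervalIntegrable _ _)
    (hc.intervalIntegrable _ _), quarter]
  have : ∫ x in (1 : ℝ)..T, √(1 - x ^ 2) = ∫ x in (1 : ℝ)..T, (0 : ℝ) := by
    apply intervalIntegral.integral_congr
    intro x hx
    rw [Set.uIcc_of_le hT] at hx
    exact Real.sqrt_eq_zero_of_nonpos (by nlinarith [hx.1])
  simp [this]

lemma sum_circle (c : ℝ) (hc : 0 < c) (N : ℕ) (hN : 1 ≤ c * N) :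
    |∑ m ∈ Finset.Icc 1 N, √(1 - (c * m) ^ 2) - Real.pi / (4 * c)| ≤ 1 := by
  set f : ℝ → ℝ := fun x => √(1 - (c * x) ^ 2) with hf
  have hanti : AntitoneOn f (Set.Icc 0 (0 + (N : ℝ))) := by
    intro x hx y hy hxy
    apply Real.sqrt_le_sqrt
    have : c * x ≤ c * y := by gcongr
    have : 0 ≤ c * x := mul_nonneg hc.le hx.1
    nlinarith
  have hint : ∫ x in (0 : ℝ)..(0 + (N : ℝ)), f x = Real.pi / (4 * c) := by
    have := intervalIntegral.integral_comp_mul_left (a := 0) (b := (N : ℝ)) (fun x : ℝ => √(1 - x ^ 2)) hc.ne'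
    rw [mul_zero, quarter' _ hN] at this
    rw [zero_add, hf]
    simp only
    rw [this, smul_eq_mul]; field_simp
  have u := hanti.sum_le_integral
  have l := hanti.integral_le_sum
  rw [hint] at u l
  have e1 : ∑ m ∈ Finset.Icc 1 N, √(1 - (c * m) ^ 2) = ∑ i ∈ Finset.range N, f (0 + ((i + 1 : ℕ) : ℝ)) := by
    rw [Finset.range_eq_Ico, Finset.sum_Ico_add' (fun i : ℕ => f (0 + (i : ℝ))) 0 N 1]
    simp [hf]
    rfl
  have e2 := Finset.sum_range_succ (fun i : ℕ => f (0 + (i : ℝ))) N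
  rw [Finset.sum_range_succ'] at e2
  have f0 : f (0 + ((0 : ℕ) : ℝ)) = 1 := by simp [hf]
  have fN : 0 ≤ f (0 + (N : ℝ)) := Real.sqrt_nonneg _
  rw [e1, abs_le]
  constructor <;> linarith

noncomputable def gg (ε : ℝ) (q : ℕ) : ℝ := √(1 / (q : ℝ) ^ 2 - ε)

lemma gg_zero (ε : ℝ) (hε : 0 < ε) (N : ℕ) (hN : 1 ≤ √ε * N) (q : ℕ) (hq : N < q) : gg ε q = 0 := by
  apply Real.sqrt_eq_zero_of_nonpos
  have hq' : (N : ℝ) < q := by exact_mod_cast hq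
  have h0 : (0 : ℝ) ≤ N := by positivity
  have hs : 0 < √ε := Real.sqrt_pos.2 hε
  have : 1 ≤ √ε * q := by nlinarith
  have h1 : 1 ≤ ε * (q : ℝ) ^ 2 := by
    calc (1 : ℝ) ≤ (√ε * q) ^ 2 := one_le_pow₀ this
      _ = _ := by rw [mul_pow, Real.sq_sqrt hε.le]
  have hqp : (0 : ℝ) < (q : ℝ) ^ 2 := by have : (0 : ℝ) < q := by linarith
                                         positivity
  rw [sub_nonpos, div_le_iff₀ hqp]; exact h1

lemma gg_mul (ε : ℝ) (hε : 0 < ε) (d m : ℕ) (hd : 1 ≤ d) (hm : 1 ≤ m) :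
    gg ε (d * m) = √(1 - (d * √ε * m) ^ 2) / (d * m) := by
  have hd' : (0 : ℝ) < d := by exact_mod_cast hd
  have hm' : (0 : ℝ) < m := by exact_mod_cast hm
  have hp : (0 : ℝ) < d * m := by positivity
  rw [gg, eq_div_iff hp.ne']
  rw [show √(1 / ((d * m : ℕ) : ℝ) ^ 2 - ε) * ((d : ℝ) * m) = √(1 / ((d * m : ℕ) : ℝ) ^ 2 - ε) * √(((d : ℝ) * m) ^ 2) by rw [Real.sqrt_sq hp.le]]
  rw [← Real.sqrt_mul' _ (sq_nonneg _)]
  congr 1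
  push_cast
  have := Real.sq_sqrt hε.le
  field_simp
  rw [this]
  try ring

open ArithmeticFunction in
lemma SI_eq (I : Set ℝ) (hI : I ⊆ Set.Icc (0 : ℝ) 1) (ε : ℝ) (hε : 0 < ε) (N : ℕ)
    (hN : 1 ≤ √ε * N) :
    SI I ε = 2 * √ε * ∑ d ∈ Finset.Icc 1 N, ∑ m ∈ Finset.Icc 1 N,
      (moebius d : ℝ) * ((fcnt I m : ℝ) * gg ε (d * m)) := by
  classical
  rw [SI]
  congr 1
  have key : ∀ q : ℕ, 1 ≤ q → (if 1 ≤ q ∧ (q : ℝ) ^ 2 ≤ 1 / ε then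
      ({a : ℤ | (a : ℝ) / q ∈ I ∧ Int.gcd a q = 1}.ncard : ℝ) *
        Real.sqrt (1 / (q : ℝ) ^ 2 - ε) else 0) =
        ∑ p ∈ q.divisorsAntidiagonal, (moebius p.1 : ℝ) * ((fcnt I p.2 : ℝ) * gg ε (p.1 * p.2)) := by
    intro q hq
    have e : (if 1 ≤ q ∧ (q : ℝ) ^ 2 ≤ 1 / ε then
      ({a : ℤ | (a : ℝ) / q ∈ I ∧ Int.gcd a q = 1}.ncard : ℝ) *
        Real.sqrt (1 / (q : ℝ) ^ 2 - ε) else 0) =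
        ({a : ℤ | (a : ℝ) / q ∈ I ∧ Int.gcd a q = 1}.ncard : ℝ) * gg ε q := by
      split_ifs with h
      · rfl
      · have h' : 1 / ε < (q : ℝ) ^ 2 := by
          by_contra hh; exact h ⟨hq, not_lt.1 hh⟩
        have : gg ε q = 0 := by
          apply Real.sqrt_eq_zero_of_nonpos
          have hqp : (0 : ℝ) < (q : ℝ) ^ 2 := lt_trans (by positivity) h'
          rw [div_lt_iff₀ hε] at h'
          rw [sub_nonpos, div_le_iff₀ hqp]; linarith
        rw [this, mul_zero]
    rw [e]
    have hc : ({a : ℤ | (a : ℝ) / q ∈ I ∧ Int.gcd a q = 1}.ncard : ℝ)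
      = ∑ d ∈ q.divisors, (moebius d : ℝ) * (fcnt I (q / d) : ℝ) := by
      exact_mod_cast congrArg (fun z : ℤ => (z : ℝ)) (cop_count I hI q hq)
    rw [hc, ← Nat.sum_divisorsAntidiagonal (fun d m => (moebius d : ℝ) * (fcnt I m : ℝ)), Finset.sum_mul]
    apply Finset.sum_congr rfl
    intro p hp
    rw [(Nat.mem_divisorsAntidiagonal.1 hp).1, mul_assoc]
  rw [tsum_eq_sum (s := Finset.Icc 1 N)]
  · rw [Finset.sum_congr rfl (fun q hq => key q (Finset.mem_Icc.1 hq).1)]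
    rw [← Finset.sum_product']
    have hfil : ∑ p ∈ (Finset.Icc 1 N ×ˢ Finset.Icc 1 N).filter (fun p : ℕ × ℕ => p.1 * p.2 ≤ N),
        (moebius p.1 : ℝ) * ((fcnt I p.2 : ℝ) * gg ε (p.1 * p.2))
        = ∑ p ∈ (Finset.Icc 1 N ×ˢ Finset.Icc 1 N),
        (moebius p.1 : ℝ) * ((fcnt I p.2 : ℝ) * gg ε (p.1 * p.2)) := by
      apply Finset.sum_filter_of_ne
      intro p _ hne
      by_contra hlt
      apply hne
      rw [gg_zero ε hε N hN _ (not_le.1 hlt)]; simp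
    rw [← hfil, ← Finset.sum_fiberwise_of_maps_to (t := Finset.Icc 1 N) (g := fun p : ℕ × ℕ => p.1 * p.2)]
    · apply Finset.sum_congr rfl
      intro q hq
      apply Finset.sum_congr _ (fun _ _ => rfl)
      ext ⟨a, b⟩
      simp only [Nat.mem_divisorsAntidiagonal, Finset.mem_filter, Finset.mem_product, Finset.mem_Icc] at hq ⊢
      constructor
      · rintro ⟨h, h0⟩
        have ha : 1 ≤ a := Nat.pos_of_ne_zero (by rintro rfl; simp at h; omega)
        have hb : 1 ≤ b := Nat.pos_of_ne_zero (by rintro rfl; simp at h; omega)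
        refine ⟨⟨⟨⟨ha, ?_⟩, hb, ?_⟩, ?_⟩, h⟩ <;> nlinarith
      · rintro ⟨_, h⟩
        exact ⟨h, by omega⟩
    · intro p hp
      simp only [Finset.mem_filter, Finset.mem_product, Finset.mem_Icc] at hp ⊢
      exact ⟨Nat.mul_pos hp.1.1.1 hp.1.2.1, hp.2⟩
  · intro q hq
    by_cases h : 1 ≤ q
    · rw [Finset.mem_Icc, not_and, not_le] at hq
      have := gg_zero ε hε N hN q (hq h)
      rw [gg] at this
      rw [this]; simp
    · rw [if_neg (fun h' => h h'.1)]

noncomputable def HH (N : ℕ) : ℝ := ∑ m ∈ Finset.Icc 1 N, (m : ℝ)⁻¹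

lemma gg_le (ε : ℝ) (hε : 0 < ε) (d m : ℕ) (hd : 1 ≤ d) (hm : 1 ≤ m) :
    gg ε (d * m) ≤ (d : ℝ)⁻¹ * (m : ℝ)⁻¹ := by
  rw [gg_mul ε hε d m hd hm, ← mul_inv, div_eq_mul_inv]
  apply mul_le_of_le_one_left (by positivity)
  refine Real.sqrt_le_iff.2 ⟨zero_le_one, ?_⟩
  nlinarith [sq_nonneg (d * √ε * m)]

lemma inner_bound (I : Set ℝ) (hO : I.OrdConnected) (hI : I ⊆ Set.Icc (0 : ℝ) 1)
    (hv : 0 < (volume I).toReal) (hv1 : (volume I).toReal ≤ 1) (ε : ℝ) (hε : 0 < ε) (N : ℕ)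
    (hN : 1 ≤ √ε * N) (d : ℕ) (hd : 1 ≤ d) :
    |∑ m ∈ Finset.Icc 1 N, (fcnt I m : ℝ) * gg ε (d * m)
      - (volume I).toReal * (Real.pi / (4 * √ε)) / (d : ℝ) ^ 2| ≤ (1 + HH N) * (d : ℝ)⁻¹ := by
  have hs : 0 < √ε := Real.sqrt_pos.2 hε
  have hd1 : (1 : ℝ) ≤ d := by exact_mod_cast hd
  have hd0 : (0 : ℝ) < d := by linarith
  set v := (volume I).toReal with hvdef
  have hcirc := sum_circle (d * √ε) (by positivity) N (by nlinarith)
  set Sc := ∑ m ∈ Finset.Icc 1 N, √(1 - (d * √ε * m) ^ 2) with hSc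
  have e : ∑ m ∈ Finset.Icc 1 N, (fcnt I m : ℝ) * gg ε (d * m)
      = v * (Sc * (d : ℝ)⁻¹) + ∑ m ∈ Finset.Icc 1 N, ((fcnt I m : ℝ) - v * m) * gg ε (d * m) := by
    rw [hSc, Finset.sum_mul, Finset.mul_sum, ← Finset.sum_add_distrib]
    apply Finset.sum_congr rfl
    intro m hm
    have hm1 := (Finset.mem_Icc.1 hm).1
    have hm' : (0 : ℝ) < m := by exact_mod_cast hm1
    have : v * (√(1 - (d * √ε * m) ^ 2) * (d : ℝ)⁻¹) = v * m * gg ε (d * m) := by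
      rw [gg_mul ε hε d m hd hm1]; field_simp
    rw [this]; ring
  have b2 : |∑ m ∈ Finset.Icc 1 N, ((fcnt I m : ℝ) - v * m) * gg ε (d * m)| ≤ HH N * (d : ℝ)⁻¹ := by
    refine (Finset.abs_sum_le_sum_abs _ _).trans ?_
    rw [HH, Finset.sum_mul]
    apply Finset.sum_le_sum
    intro m hm
    have hm1 := (Finset.mem_Icc.1 hm).1
    have hg0 : 0 ≤ gg ε (d * m) := Real.sqrt_nonneg _
    rw [abs_mul, abs_of_nonneg hg0]
    calc _ ≤ 1 * gg ε (d * m) := by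
            gcongr; exact fcnt_bound I hO hI hv m hm1
      _ ≤ _ := by rw [one_mul, mul_comm (m : ℝ)⁻¹]; exact gg_le ε hε d m hd hm1
  have b1 : |v * ((Sc - Real.pi / (4 * (d * √ε))) * (d : ℝ)⁻¹)| ≤ (d : ℝ)⁻¹ := by
    rw [abs_mul, abs_mul, abs_of_nonneg hv.le, abs_of_nonneg (inv_nonneg.2 hd0.le)]
    calc _ ≤ 1 * (1 * (d : ℝ)⁻¹) := by gcongr
      _ = _ := by ring
  have e3 : ∑ m ∈ Finset.Icc 1 N, (fcnt I m : ℝ) * gg ε (d * m)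
      - v * (Real.pi / (4 * √ε)) / (d : ℝ) ^ 2 = v * ((Sc - Real.pi / (4 * (d * √ε))) * (d : ℝ)⁻¹)
      + ∑ m ∈ Finset.Icc 1 N, ((fcnt I m : ℝ) - v * m) * gg ε (d * m) := by
    rw [e]; field_simp; ring
  rw [e3]
  refine (abs_add_le _ _).trans ?_
  linarith

open ArithmeticFunction in
lemma SI_bound (I : Set ℝ) (hO : I.OrdConnected) (hI : I ⊆ Set.Icc (0 : ℝ) 1)
    (hv : 0 < (volume I).toReal) (hv1 : (volume I).toReal ≤ 1) (ε : ℝ) (hε : 0 < ε) (N : ℕ)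
    (hN : 1 ≤ √ε * N) :
    |SI I ε - (volume I).toReal * (3 / Real.pi)| ≤ √ε * (2 * ((1 + HH N) * HH N) + 2) := by
  have hs : 0 < √ε := Real.sqrt_pos.2 hε
  have hN0 : 0 < N := by
    apply Nat.pos_of_ne_zero; rintro rfl; norm_num at hN
  have hN' : (0 : ℝ) < N := by exact_mod_cast hN0
  rw [SI_eq I hI ε hε N hN]
  set v := (volume I).toReal with hvdef
  set M := ∑ d ∈ Finset.Icc 1 N, (moebius d : ℝ) / (d : ℝ) ^ 2 with hM
  set T : ℕ → ℝ := fun d => ∑ m ∈ Finset.Icc 1 N, (fcnt I m : ℝ) * gg ε (d * m) with hT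
  have e1 : ∑ d ∈ Finset.Icc 1 N, ∑ m ∈ Finset.Icc 1 N,
      (moebius d : ℝ) * ((fcnt I m : ℝ) * gg ε (d * m))
      = v * (Real.pi / (4 * √ε)) * M
        + ∑ d ∈ Finset.Icc 1 N, (moebius d : ℝ) * (T d - v * (Real.pi / (4 * √ε)) / (d : ℝ) ^ 2) := by
    rw [hM, Finset.mul_sum, ← Finset.sum_add_distrib]
    apply Finset.sum_congr rfl
    intro d _
    rw [← Finset.mul_sum, hT]; ring
  have b1 : |∑ d ∈ Finset.Icc 1 N, (moebius d : ℝ) * (T d - v * (Real.pi / (4 * √ε)) / (d : ℝ) ^ 2)|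
      ≤ (1 + HH N) * HH N := by
    refine (Finset.abs_sum_le_sum_abs _ _).trans ?_
    rw [HH, Finset.mul_sum]
    apply Finset.sum_le_sum
    intro d hd
    rw [abs_mul]
    exact (mul_le_of_le_one_left (abs_nonneg _) (abs_moebius_real d)).trans
      (inner_bound I hO hI hv hv1 ε hε N hN d (Finset.mem_Icc.1 hd).1)
  have b2 := moebius_tail N hN0
  rw [← hM] at b2
  have b3 : |v * (Real.pi / 2) * (M - 6 / Real.pi ^ 2)| ≤ 2 * √ε := by
    have hNs : (1 : ℝ) / N ≤ √ε := by rw [div_le_iff₀ hN']; exact hN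
    have hp : Real.pi / 2 ≤ 2 := by linarith [Real.pi_le_four]
    have hp0 := Real.pi_pos
    rw [abs_mul, abs_of_nonneg (by positivity : 0 ≤ v * (Real.pi / 2))]
    calc _ ≤ (1 * 2) * √ε := by gcongr; exact b2.trans hNs
      _ = _ := by ring
  have e2 : 2 * √ε * (v * (Real.pi / (4 * √ε)) * M
        + ∑ d ∈ Finset.Icc 1 N, (moebius d : ℝ) * (T d - v * (Real.pi / (4 * √ε)) / (d : ℝ) ^ 2))
        - v * (3 / Real.pi) = v * (Real.pi / 2) * (M - 6 / Real.pi ^ 2)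
        + 2 * √ε * ∑ d ∈ Finset.Icc 1 N, (moebius d : ℝ) * (T d - v * (Real.pi / (4 * √ε)) / (d : ℝ) ^ 2) := by
    generalize ∑ d ∈ Finset.Icc 1 N, (moebius d : ℝ) * (T d - v * (Real.pi / (4 * √ε)) / (d : ℝ) ^ 2) = X
    have := Real.pi_ne_zero
    field_simp
    ring
  rw [e1, e2]
  refine (abs_add_le _ _).trans ?_
  rw [abs_mul (2 * √ε), abs_of_pos (by positivity : 0 < 2 * √ε)]
  nlinarith [mul_le_mul_of_nonneg_left b1 (by positivity : 0 ≤ 2 * √ε)]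

lemma HH_le (N : ℕ) (hN : 1 ≤ N) (δ : ℝ) (hδ : 0 < δ) : HH N ≤ (1 + 1 / δ) * (N : ℝ) ^ δ := by
  have h := harmonic_le_one_add_log N
  have e : ((harmonic N : ℚ) : ℝ) = HH N := by
    rw [harmonic_eq_sum_Icc, HH]; push_cast; rfl
  rw [e] at h
  have h1 : (1 : ℝ) ≤ N := by exact_mod_cast hN
  have h2 := Real.log_le_rpow_div (x := (N : ℝ)) (by positivity) hδ
  have h3 := Real.one_le_rpow h1 hδ.le
  have : (1 + 1 / δ) * (N : ℝ) ^ δ = (N : ℝ) ^ δ + (N : ℝ) ^ δ / δ := by ring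
  linarith

theorem LI_eq_three_div_pi_add_error :
    ∀ δ : ℝ, 0 < δ → ∃ C : ℝ, 0 < C ∧
      ∀ I : Set ℝ, I.OrdConnected → I ⊆ Set.Icc (0 : ℝ) 1 → 0 < (volume I).toReal →
        ∀ ε : ℝ, 0 < ε → ε ≤ 1 / 2 →
          |LI I ε - 3 / Real.pi| ≤ C * ((volume I).toReal)⁻¹ * ε ^ ((1 : ℝ) / 2 - δ) := by
  intro δ hδ
  set K := (1 + 1 / δ) * (2 : ℝ) ^ δ with hK
  have hK0 : 0 < K := by positivity
  refine ⟨2 * ((1 + K) * K) + 2, by positivity, ?_⟩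
  intro I hO hI hv ε hε hε2
  have hv1 : (volume I).toReal ≤ 1 := by
    have h := measure_mono (μ := volume) hI
    rw [Real.volume_Icc] at h
    have := ENNReal.toReal_mono (by simp) h
    simpa using this
  have hs : 0 < √ε := Real.sqrt_pos.2 hε
  have hs1 : √ε ≤ 1 := by refine Real.sqrt_le_iff.2 ⟨zero_le_one, ?_⟩; linarith
  set N := ⌈1 / √ε⌉₊ with hNdef
  have hN : 1 ≤ √ε * N := by
    have := Nat.le_ceil (1 / √ε)
    rw [div_le_iff₀ hs] at this
    linarith
  have hN0 : 1 ≤ N := Nat.ceil_pos.2 (by positivity)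
  have hNu : (N : ℝ) ≤ 2 / √ε := by
    have h := Nat.ceil_lt_add_one (a := 1 / √ε) (by positivity)
    have h' : 1 ≤ 1 / √ε := by rw [le_div_iff₀ hs]; linarith
    have : 2 / √ε = 1 / √ε + 1 / √ε := by ring
    rw [← hNdef] at h
    linarith
  have hb := SI_bound I hO hI hv hv1 ε hε N hN
  set w := (√ε) ^ (-δ) with hw
  have hw1 : 1 ≤ w := Real.one_le_rpow_of_pos_of_le_one_of_nonpos hs hs1 (by linarith)
  have hHK : HH N ≤ K * w := by
    refine (HH_le N hN0 δ hδ).trans ?_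
    rw [hK, mul_assoc]
    gcongr
    calc (N : ℝ) ^ δ ≤ (2 / √ε) ^ δ := by gcongr
      _ = _ := by rw [Real.div_rpow (by norm_num) hs.le, hw, Real.rpow_neg hs.le]; rfl
  have hH0 : 0 ≤ HH N := Finset.sum_nonneg (fun _ _ => by positivity)
  have hfin : √ε * (w * w) = ε ^ ((1 : ℝ) / 2 - δ) := by
    rw [hw, Real.sqrt_eq_rpow, ← Real.rpow_mul hε.le, ← Real.rpow_add hε, ← Real.rpow_add hε]
    congr 1; ring
  have hmain : √ε * (2 * ((1 + HH N) * HH N) + 2) ≤ (2 * ((1 + K) * K) + 2) * (√ε * (w * w)) := by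
    have a1 : (1 + HH N) * HH N ≤ ((1 + K) * w) * (K * w) := by
      gcongr; linarith
    have a2 : 1 ≤ w * w := by nlinarith
    have : 2 * ((1 + HH N) * HH N) + 2 ≤ (2 * ((1 + K) * K) + 2) * (w * w) := by nlinarith
    calc _ ≤ √ε * ((2 * ((1 + K) * K) + 2) * (w * w)) := by gcongr
      _ = _ := by ring
  have e : LI I ε - 3 / Real.pi = (SI I ε - (volume I).toReal * (3 / Real.pi)) * ((volume I).toReal)⁻¹ := by
    rw [LI]; field_simp
  rw [e, abs_mul, abs_of_pos (inv_pos.2 hv), ← hfin]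
  calc _ ≤ ((2 * ((1 + K) * K) + 2) * (√ε * (w * w))) * ((volume I).toReal)⁻¹ := by
        gcongr; exact hb.trans hmain
    _ = _ := by ring
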